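/- arXiv:2510.02291 — 2 statements merged into one kernel-verified Lean document; each statement's English description precedes it below -/
import Mathlib

section
/- Let K be a finite token alphabet, V = K ⊕ {m} with a distinguished mask symbol m, L ≥ 1, T ≥ 1, and x ∈ K^L. Let a_0 ≥ a_1 ≥ … ≥ a_T = 0 be a noise schedule with a_0 ≤ 1 and a_i < 1 for i ≥ 1, and set β_i := (a_{i−1} − a_i)/(1 − a_i) ∈ [0,1] for i = 1, …, T. Let q be the joint law on (V^L)^{T+1} of the backward chain (Z_T, …, Z_0) with Z_T the constant all-mask sequence and, given Z_i, the coordinates of Z_{i−1} independent with: Z_{i−1}^l = Z_i^l if Z_i^l ≠ m, and otherwise Z_{i−1}^l = x^l with probability β_i and Z_{i−1}^l = m with probability 1 − β_i. Let x_φ : V^L → (probability vectors on K)^L be an adapted probability table with x_φ(z)^l(x^l) > 0 for all z, l; let w : V^L → ℝ with 0 < w(z) ≤ 1 (the measurement likelihood weights q(y | x_φ(z))); and let p_dec : V^L → ℝ be nonnegative with p_dec(z_0) > 0 whenever q assigns positive probability to a path ending at z_0 (the decoder probability p_φ(x | z_0)). Define the tilted reverse process on paths: terminal point mass at the all-mask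 sequence, per-step weights p_φ(z_{i−1} | z_i, y) := Q_{φ,i}(z_{i−1} | z_i) · w(z_i) where Q_{φ,i} is the product kernel that fixes revealed coordinates and at masked coordinates l places mass 1−β_i on m and β_i·x_φ(z_i)^l(k) on k ∈ K, and define p_φ(x | y) := Σ over paths of the product of the terminal mass, the per-step weights, and p_dec(z_0). Then −log p_φ(x | y) ≤ E_q[−log p_dec(Z_0)] + Σ_{i=1}^{T} E_q[ β_i · Σ_{l=1}^{L} (−log x_φ(Z_i)^l(x^l)) · 1{Z_i^l = m} ] − Σ_{i=1}^{T} E_q[ log w(Z_i) ]. -/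
theorem aux_chain_mass {S : Type*} [Fintype S] (T : ℕ) (init : S → ℝ)
    (Q : Fin T → S → S → ℝ) (hQ : ∀ j s, ∑ z, Q j s z = 1) :
    ∑ ω : Fin (T + 1) → S, init (ω (Fin.last T)) * ∏ j : Fin T, Q j (ω j.succ) (ω j.castSucc)
      = ∑ s, init s := by
  induction T with
  | zero =>
    rw [← (Equiv.funUnique (Fin 1) S).symm.sum_comp]
    simp
  | succ T ih =>
    rw [← (Fin.consEquiv (fun _ => S)).sum_comp, Fintype.sum_prod_type_right]
    rw [← ih (fun j => Q j.succ) (fun j s => hQ _ s)]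
    refine Finset.sum_congr rfl fun ω _ => ?_
    have key : ∀ z : S, init ((Fin.consEquiv (fun _ => S)) (z, ω) (Fin.last (T + 1))) *
        ∏ j : Fin (T + 1), Q j ((Fin.consEquiv (fun _ => S)) (z, ω) j.succ)
          ((Fin.consEquiv (fun _ => S)) (z, ω) j.castSucc)
        = Q 0 (ω 0) z * (init (ω (Fin.last T)) *
          ∏ j : Fin T, Q j.succ (ω j.succ) (ω j.castSucc)) := by
      intro z
      rw [Fin.prod_univ_succ]
      simp only [Fin.consEquiv_apply, Fin.cons_succ, Fin.castSucc_zero, Fin.cons_zero,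
        ← Fin.succ_last, ← Fin.succ_castSucc]
      ring
    rw [Finset.sum_congr rfl fun z _ => key z, ← Finset.sum_mul, hQ, one_mul]

theorem aux_chain_zero {S : Type*} [Fintype S] (T : ℕ) (init : S → ℝ)
    (Q : Fin T → S → S → ℝ) (hQ : ∀ j s, ∑ z, Q j s z = 1)
    (i : Fin T) (g : S → S → ℝ) (hg : ∀ s, ∑ z, Q i s z * g s z = 0) :
    ∑ ω : Fin (T + 1) → S, (init (ω (Fin.last T)) *
      ∏ j : Fin T, Q j (ω j.succ) (ω j.castSucc)) * g (ω i.succ) (ω i.castSucc) = 0 := by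
  induction T with
  | zero => exact i.elim0
  | succ T ih =>
    rw [← (Fin.consEquiv (fun _ => S)).sum_comp, Fintype.sum_prod_type_right]
    have key : ∀ (ω : Fin (T + 1) → S) (z : S),
        init ((Fin.consEquiv (fun _ => S)) (z, ω) (Fin.last (T + 1))) *
        ∏ j : Fin (T + 1), Q j ((Fin.consEquiv (fun _ => S)) (z, ω) j.succ)
          ((Fin.consEquiv (fun _ => S)) (z, ω) j.castSucc)
        = Q 0 (ω 0) z * (init (ω (Fin.last T)) *
          ∏ j : Fin T, Q j.succ (ω j.succ) (ω j.castSucc)) := by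
      intro ω z
      rw [Fin.prod_univ_succ]
      simp only [Fin.consEquiv_apply, Fin.cons_succ, Fin.castSucc_zero, Fin.cons_zero,
        ← Fin.succ_last, ← Fin.succ_castSucc]
      ring
    simp only [key]
    cases i using Fin.cases with
    | zero =>
      refine Finset.sum_eq_zero fun ω _ => ?_
      simp only [Fin.consEquiv_apply, Fin.cons_succ, Fin.castSucc_zero, Fin.cons_zero]
      have := hg (ω 0)
      calc _ = (∑ z, Q 0 (ω 0) z * g (ω 0) z) * (init (ω (Fin.last T)) *
          ∏ j : Fin T, Q j.succ (ω j.succ) (ω j.castSucc)) := by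
            rw [Finset.sum_mul]
            exact Finset.sum_congr rfl fun z _ => by ring
        _ = 0 := by rw [this, zero_mul]
    | succ i =>
      rw [← ih (fun j => Q j.succ) (fun j s => hQ _ s) i hg]
      refine Finset.sum_congr rfl fun ω _ => ?_
      simp only [Fin.consEquiv_apply, Fin.cons_succ, ← Fin.succ_castSucc]
      rw [← Finset.sum_mul, ← Finset.sum_mul, hQ, one_mul]

theorem aux_prod_sum {V : Type*} [Fintype V] [DecidableEq V] (L : ℕ) (c : Fin L → V → ℝ)
    (hc : ∀ l, ∑ v, c l v = 1) : ∑ z : Fin L → V, ∏ l, c l (z l) = 1 := by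
  have := Finset.prod_univ_sum (fun _ : Fin L => (Finset.univ : Finset V)) c
  rw [Fintype.piFinset_univ] at this
  rw [← this]
  simp [hc]

theorem aux_prod_sum_zero {V : Type*} [Fintype V] [DecidableEq V] (L : ℕ)
    (c : Fin L → V → ℝ) (l₀ : Fin L) (h : V → ℝ)
    (hc : ∑ v, c l₀ v * h v = 0) : ∑ z : Fin L → V, (∏ l, c l (z l)) * h (z l₀) = 0 := by
  have := Finset.prod_univ_sum (fun _ : Fin L => (Finset.univ : Finset V))
    (fun l v => c l v * (if l = l₀ then h v else 1))
  rw [Fintype.piFinset_univ] at this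
  simp only [Finset.prod_mul_distrib, Finset.prod_ite_eq', Finset.mem_univ, if_true] at this
  rw [← this]
  exact Finset.prod_eq_zero (Finset.mem_univ l₀) (by simpa using hc)

/-- Theorem 1: Discrete Diffusion Posterior Sampling, DDPS.
Masked (absorbing) discrete diffusion over sequences of `L` tokens with `T` reverse
steps.  `K` is a finite token alphabet, `V = K ⊕ Unit` with mask `m = Sum.inr ()`,
`x : Fin L → K` the data.  The noise schedule `a : Fin (T+1) → ℝ` is antitone with
`a 0 ≤ 1`, `a T = 0`, `a i < 1` for `i ≥ 1`, and `β j = (a j - a (j+1)) / (1 - a (j+1))`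
for the reverse step from time `j+1` to time `j` (so `ω j.succ` plays the role of the
paper's conditioning state `Z_{t(i)}` and `ω j.castSucc` that of `Z_{s(i)}`).
`qpath` is the law of the backward chain: `Z_T` is the all-mask sequence and, given
`Z_i`, the coordinates of `Z_{i-1}` are independent, fixing revealed coordinates and at
masked coordinates revealing `x l` with probability `β` and staying masked otherwise.
`xφ` is the adapted probability table, `w` the measurement-likelihood tilt weights
(`w z = q(y | xφ(z))`, with `0 < w z ≤ 1`), `pdec` the decoder probability
`p_φ(x | z_0)`, and `pφxy = p_φ(x | y)` the tilted reverse path mass of `x`.  Then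
`-log p_φ(x|y) ≤ E_q[-log pdec(Z_0)]
  + ∑_i E_q[β_i ∑_l (-log xφ(Z_i)^l(x^l)) 1{Z_i^l = m}] - ∑_i E_q[log w(Z_i)]`. -/
theorem stmt_8 {K : Type*} [Fintype K] [DecidableEq K]
    (L T : ℕ) (hL : 1 ≤ L) (hT : 1 ≤ T)
    (x : Fin L → K)
    (a : Fin (T + 1) → ℝ) (ha_anti : Antitone a)
    (ha0 : a 0 ≤ 1) (ha_last : a (Fin.last T) = 0)
    (ha_lt : ∀ i : Fin (T + 1), 1 ≤ (i : ℕ) → a i < 1)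
    (β : Fin T → ℝ) (hβ : ∀ j, β j = (a j.castSucc - a j.succ) / (1 - a j.succ))
    (Qker : Fin T → (Fin L → K ⊕ Unit) → (Fin L → K ⊕ Unit) → ℝ)
    (hQker : ∀ j zhi zlo, Qker j zhi zlo = ∏ l, if zhi l = Sum.inr ()
        then Sum.elim (fun k => if k = x l then β j else 0) (fun _ => 1 - β j) (zlo l)
        else if zlo l = zhi l then (1 : ℝ) else 0)
    (qpath : (Fin (T + 1) → Fin L → K ⊕ Unit) → ℝ)
    (hqpath : ∀ ω, qpath ω
      = (if ω (Fin.last T) = (fun _ => Sum.inr ()) then (1 : ℝ) else 0)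
        * ∏ j : Fin T, Qker j (ω j.succ) (ω j.castSucc))
    (xφ : (Fin L → K ⊕ Unit) → Fin L → K → ℝ)
    (hxφ_nonneg : ∀ z l k, 0 ≤ xφ z l k) (hxφ_sum : ∀ z l, ∑ k, xφ z l k = 1)
    (hxφ_pos : ∀ z l, 0 < xφ z l (x l))
    (w : (Fin L → K ⊕ Unit) → ℝ) (hw_pos : ∀ z, 0 < w z) (hw_le : ∀ z, w z ≤ 1)
    (pdec : (Fin L → K ⊕ Unit) → ℝ) (hpdec_nonneg : ∀ z, 0 ≤ pdec z)
    (hpdec_pos : ∀ ω, 0 < qpath ω → 0 < pdec (ω 0))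
    (Qφker : Fin T → (Fin L → K ⊕ Unit) → (Fin L → K ⊕ Unit) → ℝ)
    (hQφker : ∀ j zhi zlo, Qφker j zhi zlo = ∏ l, if zhi l = Sum.inr ()
        then Sum.elim (fun k => β j * xφ zhi l k) (fun _ => 1 - β j) (zlo l)
        else if zlo l = zhi l then (1 : ℝ) else 0)
    (pφxy : ℝ)
    (hpφxy : pφxy = ∑ ω : Fin (T + 1) → Fin L → K ⊕ Unit,
      (if ω (Fin.last T) = (fun _ => Sum.inr ()) then (1 : ℝ) else 0)
        * (∏ j : Fin T, Qφker j (ω j.succ) (ω j.castSucc) * w (ω j.succ))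
        * pdec (ω 0)) :
    -Real.log pφxy
      ≤ (∑ ω : Fin (T + 1) → Fin L → K ⊕ Unit, qpath ω * (-Real.log (pdec (ω 0))))
        + (∑ j : Fin T, ∑ ω : Fin (T + 1) → Fin L → K ⊕ Unit,
            qpath ω * (β j * ∑ l, (-Real.log (xφ (ω j.succ) l (x l)))
              * (if ω j.succ l = Sum.inr () then (1 : ℝ) else 0)))
        - ∑ j : Fin T, ∑ ω : Fin (T + 1) → Fin L → K ⊕ Unit,
            qpath ω * Real.log (w (ω j.succ)) := by
  classical
  have hβ0 : ∀ j, 0 ≤ β j := fun j => by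
    rw [hβ]
    have h1 := ha_lt j.succ (by simp)
    have h2 := ha_anti (Fin.castSucc_lt_succ (i := j)).le
    exact div_nonneg (by linarith) (by linarith)
  have hβ1 : ∀ j, β j ≤ 1 := fun j => by
    rw [hβ]
    have h1 := ha_lt j.succ (by simp)
    have h2 := ha_anti (Fin.zero_le j.castSucc)
    exact (div_le_one (by linarith)).2 (by linarith)
  have hQ0 : ∀ j s z, 0 ≤ Qker j s z := fun j s z => by
    rw [hQker]
    refine Finset.prod_nonneg fun l _ => ?_
    rcases z l with k | u <;> simp only [Sum.elim_inl, Sum.elim_inr] <;> split_ifs <;>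
      linarith [hβ0 j, hβ1 j]
  have hQφ0 : ∀ j s z, 0 ≤ Qφker j s z := fun j s z => by
    rw [hQφker]
    refine Finset.prod_nonneg fun l _ => ?_
    rcases z l with k | u
    · have hk := mul_nonneg (hβ0 j) (hxφ_nonneg s l k)
      simp only [Sum.elim_inl]
      split_ifs <;> linarith
    · simp only [Sum.elim_inr]
      split_ifs <;> linarith [hβ1 j]
  have hQ1 : ∀ j s, ∑ z, Qker j s z = 1 := fun j s => by
    simp only [hQker]
    refine aux_prod_sum L (fun l v => if s l = Sum.inr ()
        then Sum.elim (fun k => if k = x l then β j else 0) (fun _ => 1 - β j) v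
        else if v = s l then (1 : ℝ) else 0) fun l => ?_
    by_cases h : s l = Sum.inr ()
    · simp [h]
    · simp [h]
  have hq0 : ∀ ω, 0 ≤ qpath ω := fun ω => by
    rw [hqpath]
    exact mul_nonneg (by split_ifs <;> norm_num) (Finset.prod_nonneg fun j _ => hQ0 _ _ _)
  have hq1 : ∑ ω, qpath ω = 1 := by
    simp only [hqpath]
    rw [aux_chain_mass T (fun s => if s = (fun _ => Sum.inr ()) then (1 : ℝ) else 0) Qker hQ1]
    simp
  -- log-ratio of a single reverse step
  let e : (Fin L → K ⊕ Unit) → (Fin L → K ⊕ Unit) → Fin L → ℝ := fun s z l =>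
    if s l = Sum.inr () then
      (if z l = Sum.inr () then 0 else Real.log (xφ s l (x l))) else 0
  have hstep : ∀ j s z, Qker j s z ≠ 0 → Qφker j s z = Qker j s z * Real.exp (∑ l, e s z l) := by
    intro j s z hne
    rw [hQker] at hne ⊢
    rw [hQφker, Real.exp_sum, ← Finset.prod_mul_distrib]
    refine Finset.prod_congr rfl fun l _ => ?_
    have hl := Finset.prod_ne_zero_iff.1 hne l (Finset.mem_univ l)
    simp only [e]
    by_cases h : s l = Sum.inr ()
    · rcases hz : z l with k | u
      · by_cases hk : k = x l
        · simp [h, hk, Real.exp_log (hxφ_pos s l)]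
        · simp [h, hz, hk] at hl
      · simp [h]
    · simp [h]
  let D : (Fin (T + 1) → Fin L → K ⊕ Unit) → ℝ := fun ω =>
    (∑ j : Fin T, ((∑ l, e (ω j.succ) (ω j.castSucc) l) + Real.log (w (ω j.succ))))
      + Real.log (pdec (ω 0))
  have hle : ∑ ω, qpath ω * Real.exp (D ω) ≤ pφxy := by
    rw [hpφxy]
    refine Finset.sum_le_sum fun ω _ => ?_
    rcases (hq0 ω).eq_or_lt with h0 | hpos
    · rw [← h0, zero_mul]
      refine mul_nonneg (mul_nonneg (by split_ifs <;> norm_num)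
        (Finset.prod_nonneg fun j _ => mul_nonneg (hQφ0 _ _ _) (hw_pos _).le)) (hpdec_nonneg _)
    · have hp := hpdec_pos ω hpos
      have hne := hpos.ne'
      rw [hqpath] at hne ⊢
      have hne2 := Finset.prod_ne_zero_iff.1 (right_ne_zero_of_mul hne)
      simp only [D]
      rw [Real.exp_add, Real.exp_log hp, Real.exp_sum, ← mul_assoc, mul_assoc (ite _ _ _),
        ← Finset.prod_mul_distrib]
      refine le_of_eq ?_
      congr 2
      refine Finset.prod_congr rfl fun j _ => ?_
      rw [Real.exp_add, Real.exp_log (hw_pos _), hstep j _ _ (hne2 j (Finset.mem_univ j))]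
      ring
  have hJ : Real.exp (∑ ω, qpath ω * D ω) ≤ ∑ ω, qpath ω * Real.exp (D ω) := by
    have := convexOn_exp.map_sum_le (t := Finset.univ) (w := qpath) (p := D)
      (fun ω _ => hq0 ω) hq1 (fun ω _ => Set.mem_univ _)
    simpa only [smul_eq_mul] using this
  have hmain : ∑ ω, qpath ω * D ω ≤ Real.log pφxy :=
    (Real.le_log_iff_exp_le ((Real.exp_pos _).trans_le (hJ.trans hle))).2 (hJ.trans hle)
  -- conditional expectation of the step log-ratio
  have hE : ∀ (j : Fin T) (l : Fin L), ∑ ω, qpath ω * e (ω j.succ) (ω j.castSucc) l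
      = ∑ ω, qpath ω * (β j * (Real.log (xφ (ω j.succ) l (x l))
        * (if ω j.succ l = Sum.inr () then (1 : ℝ) else 0))) := by
    intro j l
    rw [← sub_eq_zero, ← Finset.sum_sub_distrib]
    simp only [← mul_sub, hqpath]
    refine aux_chain_zero T (fun s => if s = (fun _ => Sum.inr ()) then (1 : ℝ) else 0) Qker hQ1 j
      (fun s z => e s z l - β j * (Real.log (xφ s l (x l))
        * (if s l = Sum.inr () then (1 : ℝ) else 0))) fun s => ?_
    simp only [hQker, e]
    refine aux_prod_sum_zero L (fun l v => if s l = Sum.inr ()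
        then Sum.elim (fun k => if k = x l then β j else 0) (fun _ => 1 - β j) v
        else if v = s l then (1 : ℝ) else 0) l
        (fun v => (if s l = Sum.inr () then
      (if v = Sum.inr () then 0 else Real.log (xφ s l (x l))) else 0)
        - β j * (Real.log (xφ s l (x l))
        * (if s l = Sum.inr () then (1 : ℝ) else 0))) ?_
    by_cases h : s l = Sum.inr ()
    · simp [h]
      ring
    · simp [h]
  have hD : ∑ ω, qpath ω * D ω = (∑ j : Fin T, ∑ l, ∑ ω, qpath ω * e (ω j.succ) (ω j.castSucc) l)
      + (∑ j : Fin T, ∑ ω, qpath ω * Real.log (w (ω j.succ)))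
      + ∑ ω, qpath ω * Real.log (pdec (ω 0)) := by
    simp only [D, mul_add, Finset.sum_add_distrib, Finset.mul_sum]
    rw [Finset.sum_comm]
    congr 2
    · refine Finset.sum_congr rfl fun j _ => ?_
      rw [Finset.sum_comm]
    · rw [Finset.sum_comm]
  have hM : (∑ j : Fin T, ∑ ω : Fin (T + 1) → Fin L → K ⊕ Unit,
            qpath ω * (β j * ∑ l, (-Real.log (xφ (ω j.succ) l (x l)))
              * (if ω j.succ l = Sum.inr () then (1 : ℝ) else 0)))
      = - ∑ j : Fin T, ∑ l, ∑ ω, qpath ω * e (ω j.succ) (ω j.castSucc) l := by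
    rw [← Finset.sum_neg_distrib]
    refine Finset.sum_congr rfl fun j _ => ?_
    simp only [hE, Finset.mul_sum]
    rw [Finset.sum_comm, ← Finset.sum_neg_distrib]
    refine Finset.sum_congr rfl fun l _ => ?_
    rw [← Finset.sum_neg_distrib]
    exact Finset.sum_congr rfl fun ω _ => by ring
  rw [hM]
  simp only [mul_neg, Finset.sum_neg_distrib]
  linarith
end

section
/- Let K be a finite token alphabet, V = K ⊕ {m} with a distinguished mask symbol m, L ≥ 1, T ≥ 1, and x ∈ K^L. Let a_0 ≥ a_1 ≥ … ≥ a_T = 0 be a noise schedule with a_0 ≤ 1 and a_i < 1 for i ≥ 1, and set β_i := (a_{i−1} − a_i)/(1 − a_i) ∈ [0,1] for i = 1, …, T. Let q be the joint law on (V^L)^{T+1} of the backward chain (Z_T, …, Z_0) with Z_T the constant all-mask sequence and, given Z_i, the coordinates of Z_{i−1} independent with: Z_{i−1}^l = Z_i^l if Z_i^l ≠ m, and otherwise Z_{i−1}^l = x^l with probability β_i and Z_{i−1}^l = m with probability 1 − β_i. Let x_θ, x_φ : V^L → (probability vectors on K)^L be probability tables with x_θ(z)^l(x^l) > 0 and x_φ(z)^l(x^l)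 > 0 for all z, l; let w : V^L → ℝ with 0 < w(z) ≤ 1; let p_dec : V^L → ℝ be nonnegative with p_dec(z_0) > 0 whenever q assigns positive probability to a path ending at z_0 (the shared decoder p_φ(x|z_0) = p_θ(x|z_0)); and define the tilted reverse mass p_φ(x | y) as the sum over paths of the terminal all-mask point mass times ∏_{i=1}^{T} Q_{φ,i}(z_{i−1} | z_i)·w(z_i) times p_dec(z_0), where Q_{φ,i} fixes revealed coordinates and at masked coordinates l places mass 1−β_i on m and β_i·x_φ(z_i)^l(k) on k ∈ K. Define the pretrained negative evidence lower bound L_NELBO := E_q[−log p_dec(Z_0)] + Σ_{i=1}^{T} E_q[ β_i · Σ_{l=1}^{L} (−log x_θ(Z_i)^l(x^l)) · 1{Z_i^l = m} ]. Then −log p_φ(x | y) ≤ L_NELBO + Σ_{i=1}^{T} E_q[ β_i · Σ_{l=1}^{L} log( x_θ(Z_i)^l(x^l) / x_φ(Z_i)^l(x^l) ) · 1{Z_i^l = m} ] − Σ_{i=1}^{T} E_q[ log w(Z_i) ]. -/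
theorem chain_sum {S : Type*} [Fintype S] (T : ℕ) (R : Fin T → S → S → ℝ) (c : Fin T → ℝ)
    (f : S → ℝ) (h : ∀ j z, ∑ z', R j z z' = c j) :
    ∑ ω : Fin (T + 1) → S, f (ω (Fin.last T)) * ∏ j : Fin T, R j (ω j.succ) (ω j.castSucc)
      = (∑ z, f z) * ∏ j, c j := by
  induction T with
  | zero =>
    simp only [Finset.univ_eq_empty, Finset.prod_empty, mul_one]
    exact Fintype.sum_equiv (Equiv.funUnique (Fin 1) S) _ _ (fun ω => rfl)
  | succ T ih =>
    rw [← (Fin.consEquiv (fun _ : Fin (T + 1 + 1) => S)).sum_comp, Fintype.sum_prod_type,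
      Finset.sum_comm]
    have key : ∀ ω' : Fin (T + 1) → S, ∑ z0 : S,
        (f ((Fin.consEquiv (fun _ : Fin (T + 1 + 1) => S)) (z0, ω') (Fin.last (T + 1)))
          * ∏ j : Fin (T + 1), R j
            ((Fin.consEquiv (fun _ : Fin (T + 1 + 1) => S)) (z0, ω') j.succ)
            ((Fin.consEquiv (fun _ : Fin (T + 1 + 1) => S)) (z0, ω') j.castSucc))
        = c 0 * (f (ω' (Fin.last T))
          * ∏ j : Fin T, R j.succ (ω' j.succ) (ω' j.castSucc)) := by
      intro ω'
      rw [← h 0 (ω' 0), Finset.sum_mul]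
      refine Finset.sum_congr rfl fun z0 _ => ?_
      rw [Fin.prod_univ_succ]
      have e1 : ∀ i : Fin (T + 1),
          (Fin.consEquiv (fun _ : Fin (T + 1 + 1) => S)) (z0, ω') i.succ = ω' i := fun i => rfl
      have e2 : (Fin.consEquiv (fun _ : Fin (T + 1 + 1) => S)) (z0, ω') (0 : Fin (T + 1)).castSucc
          = z0 := rfl
      have e3 : (Fin.consEquiv (fun _ : Fin (T + 1 + 1) => S)) (z0, ω') (Fin.last (T + 1))
          = ω' (Fin.last T) := rfl
      simp only [← Fin.succ_castSucc, e1, e2, e3]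
      ring
    rw [Finset.sum_congr rfl fun ω' _ => key ω', ← Finset.mul_sum,
      ih (fun j => R j.succ) (fun j => c j.succ) (fun j z => h j.succ z), Fin.prod_univ_succ]
    ring

theorem jensen_log {Ω : Type*} [Fintype Ω] (q r P : Ω → ℝ) (p : ℝ)
    (hq : ∀ ω, 0 ≤ q ω) (hq1 : ∑ ω, q ω = 1) (hr : ∀ ω, 0 < q ω → 0 < r ω)
    (hP : ∀ ω, q ω * r ω ≤ P ω) (hp : p = ∑ ω, P ω) :
    -Real.log p ≤ ∑ ω, q ω * (-Real.log (r ω)) := by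
  have hqr : ∀ ω, 0 ≤ q ω * r ω := fun ω => by
    rcases (hq ω).eq_or_lt with h | h
    · simp [← h]
    · exact (mul_pos h (hr ω h)).le
  have hle : ∑ ω, q ω * r ω ≤ p := hp ▸ Finset.sum_le_sum fun ω _ => hP ω
  have hpos : 0 < p := by
    refine lt_of_lt_of_le ?_ hle
    obtain ⟨ω, _, hω⟩ : ∃ ω ∈ Finset.univ, 0 < q ω := by
      by_contra! hc
      have := Finset.sum_nonpos hc
      linarith
    exact Finset.sum_pos' (fun ω _ => hqr ω) ⟨ω, Finset.mem_univ _, mul_pos hω (hr ω hω)⟩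
  have hpt : ∀ ω, q ω * (Real.log (r ω) - Real.log p) ≤ q ω * r ω / p - q ω := fun ω => by
    rcases (hq ω).eq_or_lt with h | h
    · simp [← h]
    · have hr' := hr ω h
      rw [← Real.log_div hr'.ne' hpos.ne']
      have := mul_le_mul_of_nonneg_left (Real.log_le_sub_one_of_pos (div_pos hr' hpos)) h.le
      refine this.trans (le_of_eq ?_)
      ring
  have hs := Finset.sum_le_sum fun ω (_ : ω ∈ Finset.univ) => hpt ω
  simp only [mul_sub, Finset.sum_sub_distrib, ← Finset.sum_mul, ← Finset.sum_div, hq1] at hs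
  have : (∑ ω, q ω * r ω) / p ≤ 1 := (div_le_one hpos).2 hle
  simp only [mul_neg, Finset.sum_neg_distrib]
  linarith

/-- Theorem 2: Test-time Anchored Posterior Sampling, APS.
Same masked (absorbing) discrete diffusion setup as DDPS: `K` a finite token alphabet,
`V = K ⊕ Unit` with mask `m = Sum.inr ()`, sequences of `L` tokens, `T` reverse steps,
data `x : Fin L → K`, antitone noise schedule `a` with `a 0 ≤ 1`, `a T = 0`, `a i < 1`
for `i ≥ 1`, and `β j = (a j - a (j+1)) / (1 - a (j+1))`.  `qpath` is the law of the
backward chain (all-mask at time `T`; coordinates revealed as `x l` with probability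
`β` at masked positions, fixed otherwise).  `xθ` is the pretrained probability table,
`xφ` the adapted table, `w` the measurement-likelihood tilt weights (`0 < w z ≤ 1`),
`pdec` the shared decoder, `pφxy = p_φ(x | y)` the tilted reverse path mass of `x`, and
`LNELBO` the pretrained negative evidence lower bound.  Then
`-log p_φ(x|y) ≤ L_NELBO
  + ∑_i E_q[β_i ∑_l log (xθ(Z_i)^l(x^l) / xφ(Z_i)^l(x^l)) 1{Z_i^l = m}]
  - ∑_i E_q[log w(Z_i)]`. -/
theorem stmt_9 {K : Type*} [Fintype K] [DecidableEq K]
    (L T : ℕ) (hL : 1 ≤ L) (hT : 1 ≤ T)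
    (x : Fin L → K)
    (a : Fin (T + 1) → ℝ) (ha_anti : Antitone a)
    (ha0 : a 0 ≤ 1) (ha_last : a (Fin.last T) = 0)
    (ha_lt : ∀ i : Fin (T + 1), 1 ≤ (i : ℕ) → a i < 1)
    (β : Fin T → ℝ) (hβ : ∀ j, β j = (a j.castSucc - a j.succ) / (1 - a j.succ))
    (Qker : Fin T → (Fin L → K ⊕ Unit) → (Fin L → K ⊕ Unit) → ℝ)
    (hQker : ∀ j zhi zlo, Qker j zhi zlo = ∏ l, if zhi l = Sum.inr ()
        then Sum.elim (fun k => if k = x l then β j else 0) (fun _ => 1 - β j) (zlo l)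
        else if zlo l = zhi l then (1 : ℝ) else 0)
    (qpath : (Fin (T + 1) → Fin L → K ⊕ Unit) → ℝ)
    (hqpath : ∀ ω, qpath ω
      = (if ω (Fin.last T) = (fun _ => Sum.inr ()) then (1 : ℝ) else 0)
        * ∏ j : Fin T, Qker j (ω j.succ) (ω j.castSucc))
    (xθ xφ : (Fin L → K ⊕ Unit) → Fin L → K → ℝ)
    (hxθ_nonneg : ∀ z l k, 0 ≤ xθ z l k) (hxθ_sum : ∀ z l, ∑ k, xθ z l k = 1)
    (hxθ_pos : ∀ z l, 0 < xθ z l (x l))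
    (hxφ_nonneg : ∀ z l k, 0 ≤ xφ z l k) (hxφ_sum : ∀ z l, ∑ k, xφ z l k = 1)
    (hxφ_pos : ∀ z l, 0 < xφ z l (x l))
    (w : (Fin L → K ⊕ Unit) → ℝ) (hw_pos : ∀ z, 0 < w z) (hw_le : ∀ z, w z ≤ 1)
    (pdec : (Fin L → K ⊕ Unit) → ℝ) (hpdec_nonneg : ∀ z, 0 ≤ pdec z)
    (hpdec_pos : ∀ ω, 0 < qpath ω → 0 < pdec (ω 0))
    (Qφker : Fin T → (Fin L → K ⊕ Unit) → (Fin L → K ⊕ Unit) → ℝ)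
    (hQφker : ∀ j zhi zlo, Qφker j zhi zlo = ∏ l, if zhi l = Sum.inr ()
        then Sum.elim (fun k => β j * xφ zhi l k) (fun _ => 1 - β j) (zlo l)
        else if zlo l = zhi l then (1 : ℝ) else 0)
    (pφxy : ℝ)
    (hpφxy : pφxy = ∑ ω : Fin (T + 1) → Fin L → K ⊕ Unit,
      (if ω (Fin.last T) = (fun _ => Sum.inr ()) then (1 : ℝ) else 0)
        * (∏ j : Fin T, Qφker j (ω j.succ) (ω j.castSucc) * w (ω j.succ))
        * pdec (ω 0))
    (LNELBO : ℝ)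
    (hLNELBO : LNELBO
      = (∑ ω : Fin (T + 1) → Fin L → K ⊕ Unit, qpath ω * (-Real.log (pdec (ω 0))))
        + ∑ j : Fin T, ∑ ω : Fin (T + 1) → Fin L → K ⊕ Unit,
            qpath ω * (β j * ∑ l, (-Real.log (xθ (ω j.succ) l (x l)))
              * (if ω j.succ l = Sum.inr () then (1 : ℝ) else 0))) :
    -Real.log pφxy
      ≤ LNELBO
        + (∑ j : Fin T, ∑ ω : Fin (T + 1) → Fin L → K ⊕ Unit,
            qpath ω * (β j * ∑ l,
              Real.log (xθ (ω j.succ) l (x l) / xφ (ω j.succ) l (x l))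
                * (if ω j.succ l = Sum.inr () then (1 : ℝ) else 0)))
        - ∑ j : Fin T, ∑ ω : Fin (T + 1) → Fin L → K ⊕ Unit,
            qpath ω * Real.log (w (ω j.succ)) := by
  classical
  have hden : ∀ j : Fin T, 0 < 1 - a j.succ := fun j => by
    have := ha_lt j.succ (by simp)
    linarith
  have hβ0 : ∀ j, 0 ≤ β j := fun j => by
    rw [hβ]
    exact div_nonneg (sub_nonneg.2 (ha_anti (Fin.castSucc_lt_succ).le)) (hden j).le
  have hβ1 : ∀ j, β j ≤ 1 := fun j => by
    rw [hβ, div_le_one (hden j)]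
    have := ha_anti (Fin.zero_le j.castSucc)
    linarith
  -- the coordinate factors
  set F : Fin T → (Fin L → K ⊕ Unit) → Fin L → K ⊕ Unit → ℝ := fun j zhi l v =>
    if zhi l = Sum.inr ()
      then Sum.elim (fun k => if k = x l then β j else 0) (fun _ => 1 - β j) v
      else if v = zhi l then (1 : ℝ) else 0 with hF
  have hQF : ∀ j zhi zlo, Qker j zhi zlo = ∏ l, F j zhi l (zlo l) := hQker
  have hF0 : ∀ j zhi l v, 0 ≤ F j zhi l v := fun j zhi l v => by
    have := hβ0 j
    have := hβ1 j
    simp only [hF]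
    rcases v with k | u
    · simp only [Sum.elim_inl]
      split_ifs <;> linarith
    · simp only [Sum.elim_inr]
      split_ifs <;> linarith
  have hFsum : ∀ j zhi l, ∑ v, F j zhi l v = 1 := fun j zhi l => by
    simp only [hF]
    by_cases h : zhi l = Sum.inr ()
    · simp [h]
    · simp [h]
  have hQsum : ∀ j zhi, ∑ zlo, Qker j zhi zlo = 1 := fun j zhi => by
    simp only [hQF]
    rw [← Fintype.prod_sum]
    simp [hFsum]
  have hinit : ∑ z : Fin L → K ⊕ Unit,
      (if z = (fun _ => Sum.inr ()) then (1 : ℝ) else 0) = 1 := by simp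
  have hQ0 : ∀ j zhi zlo, 0 ≤ Qker j zhi zlo := fun j zhi zlo => by
    rw [hQF]
    exact Finset.prod_nonneg fun l _ => hF0 _ _ _ _
  have hi0 : ∀ z : Fin L → K ⊕ Unit,
      (0 : ℝ) ≤ if z = (fun _ => Sum.inr ()) then (1 : ℝ) else 0 := fun z => by
    split_ifs <;> norm_num
  have hq0 : ∀ ω, 0 ≤ qpath ω := fun ω => by
    rw [hqpath]
    exact mul_nonneg (hi0 _) (Finset.prod_nonneg fun j _ => hQ0 _ _ _)
  have hq1 : ∑ ω, qpath ω = 1 := by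
    simp only [hqpath]
    rw [chain_sum T Qker (fun _ => 1)
      (fun z => if z = (fun _ => Sum.inr ()) then (1 : ℝ) else 0) hQsum, hinit]
    simp
  -- the reveal factor
  set ρ : (Fin L → K ⊕ Unit) → (Fin L → K ⊕ Unit) → Fin L → ℝ := fun zhi zlo l =>
    if zhi l = Sum.inr () ∧ zlo l ≠ Sum.inr () then xφ zhi l (x l) else 1 with hρ
  have hρpos : ∀ zhi zlo l, 0 < ρ zhi zlo l := fun zhi zlo l => by
    simp only [hρ]
    split_ifs
    · exact hxφ_pos _ _
    · norm_num
  have hfac : ∀ j zhi zlo, Qker j zhi zlo * ∏ l, ρ zhi zlo l ≤ Qφker j zhi zlo := by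
    intro j zhi zlo
    rw [hQF, hQφker, ← Finset.prod_mul_distrib]
    refine Finset.prod_le_prod (fun l _ => mul_nonneg (hF0 _ _ _ _) (hρpos _ _ _).le) ?_
    intro l _
    simp only [hF, hρ]
    by_cases h : zhi l = Sum.inr ()
    · rcases hz : zlo l with k | u
      · by_cases hk : k = x l
        · simp [h, hk]
        · simpa [h, hk] using mul_nonneg (hβ0 j) (hxφ_nonneg zhi l k)
      · simp [h]
    · simp [h]
  -- tower property
  have htower : ∀ (j : Fin T) (l : Fin L), ∑ ω, qpath ω * Real.log (ρ (ω j.succ) (ω j.castSucc) l)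
      = ∑ ω, qpath ω * (β j * (Real.log (xφ (ω j.succ) l (x l))
          * (if ω j.succ l = Sum.inr () then (1 : ℝ) else 0))) := by
    intro j l
    rw [← sub_eq_zero, ← Finset.sum_sub_distrib]
    set g : (Fin L → K ⊕ Unit) → K ⊕ Unit → ℝ := fun zhi v =>
      if zhi l = Sum.inr () then
        Real.log (xφ zhi l (x l)) * ((if v ≠ Sum.inr () then 1 else 0) - β j) else 0 with hg
    have hgF : ∀ zhi, ∑ v, F j zhi l v * g zhi v = 0 := fun zhi => by
      simp only [hF, hg]
      by_cases h : zhi l = Sum.inr ()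
      · simp [h]
        ring
      · simp [h]
    have hsum : ∀ i zhi, ∑ zlo, Qker i zhi zlo * (if i = j then g zhi (zlo l) else 1)
        = if i = j then 0 else 1 := by
      intro i zhi
      by_cases hij : i = j
      · subst hij
        have : ∀ zlo : Fin L → K ⊕ Unit, Qker i zhi zlo * g zhi (zlo l)
            = ∏ l', F i zhi l' (zlo l') * (if l' = l then g zhi (zlo l') else 1) := by
          intro zlo
          rw [Finset.prod_mul_distrib, hQF]
          simp
        simp only [if_true, this]
        rw [← Fintype.prod_sum (f := fun l' v => F i zhi l' v * (if l' = l then g zhi v else 1))]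
        exact Finset.prod_eq_zero (Finset.mem_univ l) (by simpa using hgF zhi)
      · simp [hij, hQsum]
    have hc := chain_sum T (fun i zhi zlo => Qker i zhi zlo * (if i = j then g zhi (zlo l) else 1))
      (fun i => if i = j then 0 else 1)
      (fun z => if z = (fun _ => Sum.inr ()) then (1 : ℝ) else 0) hsum
    rw [Finset.prod_eq_zero (Finset.mem_univ j) (by simp), mul_zero] at hc
    refine Eq.trans ?_ hc
    refine Finset.sum_congr rfl fun ω _ => ?_
    rw [Finset.prod_mul_distrib, ← mul_assoc (ite _ _ _), ← hqpath, ← mul_sub]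
    congr 1
    simp only [Finset.prod_ite_eq', Finset.mem_univ, if_true, hg, hρ]
    by_cases h : ω j.succ l = Sum.inr ()
    · by_cases h' : ω j.castSucc l = Sum.inr ()
      · simp [h, h']
        ring
      · simp [h, h']
        ring
    · simp [h]
  set r : (Fin (T + 1) → Fin L → K ⊕ Unit) → ℝ := fun ω =>
    (∏ j : Fin T, (∏ l, ρ (ω j.succ) (ω j.castSucc) l) * w (ω j.succ)) * pdec (ω 0) with hr
  have hin : ∀ ω : Fin (T + 1) → Fin L → K ⊕ Unit, ∀ j : Fin T,
      0 < (∏ l, ρ (ω j.succ) (ω j.castSucc) l) * w (ω j.succ) := fun ω j =>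
    mul_pos (Finset.prod_pos fun l _ => hρpos _ _ _) (hw_pos _)
  have hJ := jensen_log qpath r _ pφxy hq0 hq1
    (fun ω hω => mul_pos (Finset.prod_pos fun j _ => hin ω j) (hpdec_pos ω hω))
    (fun ω => ?_) hpφxy
  swap
  · rw [hqpath]
    simp only [hr]
    rw [← mul_assoc, mul_assoc (ite _ _ _), ← Finset.prod_mul_distrib]
    refine mul_le_mul_of_nonneg_right ?_ (hpdec_nonneg _)
    refine mul_le_mul_of_nonneg_left ?_ (hi0 _)
    refine Finset.prod_le_prod (fun j _ => mul_nonneg (hQ0 _ _ _) (hin ω j).le) fun j _ => ?_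
    rw [← mul_assoc]
    exact mul_le_mul_of_nonneg_right (hfac _ _ _) (hw_pos _).le
  refine hJ.trans (le_of_eq ?_)
  have hlog : ∀ ω, qpath ω * (-Real.log (r ω)) = qpath ω * (-Real.log (pdec (ω 0)))
      - ∑ j : Fin T, ∑ l, qpath ω * Real.log (ρ (ω j.succ) (ω j.castSucc) l)
      - ∑ j : Fin T, qpath ω * Real.log (w (ω j.succ)) := by
    intro ω
    rcases (hq0 ω).eq_or_lt with h | h
    · simp [← h]
    · simp only [hr]
      rw [Real.log_mul (Finset.prod_pos fun j _ => hin ω j).ne' (hpdec_pos ω h).ne',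
        Real.log_prod (fun j _ => (hin ω j).ne')]
      have : ∀ j : Fin T, Real.log ((∏ l, ρ (ω j.succ) (ω j.castSucc) l) * w (ω j.succ))
          = ∑ l, Real.log (ρ (ω j.succ) (ω j.castSucc) l) + Real.log (w (ω j.succ)) := fun j => by
        rw [Real.log_mul (Finset.prod_pos fun l _ => hρpos _ _ _).ne' (hw_pos _).ne',
          Real.log_prod (fun l _ => (hρpos _ _ _).ne')]
      simp only [this, Finset.sum_add_distrib, ← Finset.mul_sum]
      ring
  simp only [hlog, Finset.sum_sub_distrib]
  have hA : ∑ ω, ∑ j : Fin T, ∑ l, qpath ω * Real.log (ρ (ω j.succ) (ω j.castSucc) l)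
      = ∑ j : Fin T, ∑ ω, qpath ω * (β j * ∑ l, Real.log (xφ (ω j.succ) l (x l))
          * (if ω j.succ l = Sum.inr () then (1 : ℝ) else 0)) := by
    rw [Finset.sum_comm]
    refine Finset.sum_congr rfl fun j _ => ?_
    rw [Finset.sum_comm]
    simp only [htower]
    rw [Finset.sum_comm]
    simp only [Finset.mul_sum]
  have hB : ∑ ω, ∑ j : Fin T, qpath ω * Real.log (w (ω j.succ))
      = ∑ j : Fin T, ∑ ω, qpath ω * Real.log (w (ω j.succ)) := Finset.sum_comm
  rw [hA, hB, hLNELBO]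
  have hC : ∀ (ω : Fin (T + 1) → Fin L → K ⊕ Unit) (j : Fin T) (l : Fin L),
      Real.log (xθ (ω j.succ) l (x l) / xφ (ω j.succ) l (x l))
      = Real.log (xθ (ω j.succ) l (x l)) - Real.log (xφ (ω j.succ) l (x l)) := fun ω j l =>
    Real.log_div (hxθ_pos _ _).ne' (hxφ_pos _ _).ne'
  simp only [hC, sub_mul, neg_mul, Finset.sum_sub_distrib, Finset.sum_neg_distrib, mul_sub, mul_neg]
  ring
end
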